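/- For all y₁, y₂ ∈ ℝ^d, (1/σ_k²) ∬_{S^k×S^k} g(y₁,u₁,y₂,u₂) dν(u₁) dν(u₂) = 1 + c₁ C ∫_{ℝ^d} k₀₁(y₁−y') k₀₁(y₂−y') dy', where c₁ = (1/σ_k²) ∫_{S^k}∫_{S^k}∫_{S^k} k₀₂(d(u₁,u')) k₀₂(d(u₂,u')) dν(u₁) dν(u₂) dν(u') (equality holding in [0,∞]). In particular, the pair correlation function of the spatial components of the shot noise Cox process depends on the spherical kernel k₀₂ only through the constant c₁. -/

import Mathlib

open MeasureTheory Real Set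
open scoped ENNReal NNReal RealInnerProductSpace Classical

noncomputable section

/-- `d`-dimensional Euclidean space. -/
abbrev Eucl (d : ℕ) : Type := EuclideanSpace ℝ (Fin d)

/-- The unit `k`-sphere in `ℝ^{k+1}`. -/
abbrev Sph (k : ℕ) : Type := Metric.sphere (0 : EuclideanSpace ℝ (Fin (k+1))) 1

/-- The surface measure `ν` on the `k`-sphere: the `k`-dimensional Hausdorff measure. -/
noncomputable def sphMeasure (k : ℕ) : Measure (Sph k) := μH[k]

/-- The geodesic distance `d(u,v) = arccos ⟨u,v⟩` on the `k`-sphere. -/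
noncomputable def gd {k : ℕ} (u v : Sph k) : ℝ :=
  Real.arccos ⟪(u : EuclideanSpace ℝ (Fin (k+1))), (v : EuclideanSpace ℝ (Fin (k+1)))⟫

/-- The pair correlation function of a homogeneous shot noise Cox process on
`ℝ^d × S^k` with separable kernel `k₀₁ ⊗ k₀₂` and constant `C = m₂/(α m₁²)`. -/
noncomputable def sncpG {d k : ℕ} (C : ℝ≥0) (k₀₁ : Eucl d → ℝ≥0) (k₀₂ : ℝ → ℝ≥0)
    (y₁ : Eucl d) (u₁ : Sph k) (y₂ : Eucl d) (u₂ : Sph k) : ℝ≥0∞ :=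
  1 + (C : ℝ≥0∞) * ∫⁻ y', (∫⁻ u', ((k₀₁ (y₁ - y') : ℝ≥0∞) * (k₀₁ (y₂ - y') : ℝ≥0∞) *
    (k₀₂ (gd u₁ u') : ℝ≥0∞) * (k₀₂ (gd u₂ u') : ℝ≥0∞)) ∂(sphMeasure k))

lemma sph_normalize_lip {E : Type*} [NormedAddCommGroup E] [NormedSpace ℝ E] (x y : E)
    (hx : 1 ≤ ‖x‖) (hy : 1 ≤ ‖y‖) :
    ‖‖x‖⁻¹ • x - ‖y‖⁻¹ • y‖ ≤ 2 * ‖x - y‖ := by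
  have hx0 : 0 < ‖x‖ := by linarith
  have hy0 : 0 < ‖y‖ := by linarith
  have h : ‖x‖⁻¹ • x - ‖y‖⁻¹ • y = ‖x‖⁻¹ • (x - y) + (‖x‖⁻¹ * (‖y‖ - ‖x‖)) • (‖y‖⁻¹ • y) := by
    rw [smul_sub, smul_smul, mul_sub, sub_mul, sub_smul, inv_mul_cancel₀ hx0.ne', one_mul,
      mul_assoc, mul_inv_cancel₀ hy0.ne', mul_one]
    abel
  have hinv : ‖x‖⁻¹ ≤ 1 := inv_le_one_of_one_le₀ hx
  have hny : ‖‖y‖⁻¹ • y‖ = 1 := by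
    rw [norm_smul, norm_inv, norm_norm, inv_mul_cancel₀ hy0.ne']
  rw [h]
  refine (norm_add_le _ _).trans ?_
  rw [norm_smul _ (‖y‖⁻¹ • y), hny, norm_smul, norm_mul, norm_inv, norm_norm, mul_one]
  have h2 : ‖‖y‖ - ‖x‖‖ ≤ ‖x - y‖ := by
    rw [norm_sub_rev x y]; exact abs_norm_sub_norm_le y x
  have h3 := norm_nonneg (x - y)
  have h4 := norm_nonneg (‖y‖ - ‖x‖)
  have h5 : 0 ≤ ‖x‖⁻¹ := by positivity
  nlinarith

/-- Lift of a cube face point. -/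
def sphFace (k : ℕ) (i : Fin (k+1)) (s : ℝ) (x : Fin k → ℝ) : EuclideanSpace ℝ (Fin (k+1)) :=
  WithLp.toLp 2 (i.insertNth (α := fun _ => ℝ) s x)

/-- Radial projection of the cube face. -/
def sphChart (k : ℕ) (i : Fin (k+1)) (s : ℝ) (x : Fin k → ℝ) : EuclideanSpace ℝ (Fin (k+1)) :=
  ‖sphFace k i s x‖⁻¹ • sphFace k i s x

lemma sphFace_norm (k : ℕ) (i : Fin (k+1)) (s : ℝ) (hs : |s| = 1) (x : Fin k → ℝ) :
    1 ≤ ‖sphFace k i s x‖ := by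
  have := PiLp.norm_apply_le (sphFace k i s x) i
  simpa [sphFace, hs] using this

lemma sphFace_lip (k : ℕ) (i : Fin (k+1)) (s : ℝ) : ∃ K : ℝ≥0, LipschitzWith K (sphFace k i s) := by
  have h1 := PiLp.lipschitzWith_toLp 2 (fun _ : Fin (k+1) => ℝ)
  have h2 : LipschitzWith 1 (fun x : Fin k → ℝ => i.insertNth (α := fun _ => ℝ) s x) := by
    refine LipschitzWith.of_dist_le_mul fun x y => ?_
    rw [Fin.dist_insertNth_insertNth]
    simp
  exact ⟨_, h1.comp h2⟩

lemma sphChart_lip (k : ℕ) (i : Fin (k+1)) (s : ℝ) (hs : |s| = 1) :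
    ∃ K : ℝ≥0, LipschitzWith K (sphChart k i s) := by
  obtain ⟨K, hK⟩ := sphFace_lip k i s
  refine ⟨2 * K, LipschitzWith.of_dist_le_mul fun x y => ?_⟩
  have := hK.dist_le_mul x y
  rw [dist_eq_norm] at this ⊢
  have h2 := sph_normalize_lip _ _ (sphFace_norm k i s hs x) (sphFace_norm k i s hs y)
  unfold sphChart
  push_cast
  linarith

lemma sphChart_finite (k : ℕ) (i : Fin (k+1)) (s : ℝ) (hs : |s| = 1) :
    μH[(k:ℝ)] (sphChart k i s '' Set.Icc (-1) 1) < ∞ := by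
  obtain ⟨K, hK⟩ := sphChart_lip k i s hs
  refine (hK.hausdorffMeasure_image_le (Nat.cast_nonneg k) _).trans_lt ?_
  have : (μH[(k:ℝ)] : Measure (Fin k → ℝ)) = volume := by
    have := hausdorffMeasure_pi_real (ι := Fin k)
    simpa using this
  rw [this]
  refine ENNReal.mul_lt_top (ENNReal.rpow_lt_top_of_nonneg (Nat.cast_nonneg k) (by simp)) ?_
  exact isCompact_Icc.measure_lt_top

lemma sph_cover (k : ℕ) : Metric.sphere (0 : EuclideanSpace ℝ (Fin (k+1))) 1 ⊆
    ⋃ i : Fin (k+1), (sphChart k i 1 '' Set.Icc (-1) 1 ∪ sphChart k i (-1) '' Set.Icc (-1) 1) := by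
  intro u hu
  have hu1 : ‖u‖ = 1 := by simpa using hu
  obtain ⟨i, hi⟩ := Finite.exists_max (fun i => |u i|)
  have hpos : 0 < |u i| := by
    rcases (abs_nonneg (u i)).lt_or_eq with h | h
    · exact h
    · exfalso
      have : u = 0 := by
        ext j
        have := hi j
        simp only [← h] at this
        simpa using this
      rw [this] at hu1
      simp at hu1
  have key : ∀ s : ℝ, u i = s * |u i| →
      u ∈ sphChart k i s '' Set.Icc (-1) 1 := by
    intro s hs
    refine ⟨fun j => u (i.succAbove j) / |u i|, ?_, ?_⟩
    · rw [Set.mem_Icc, Pi.le_def, Pi.le_def]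
      have h : ∀ j, abs (u (i.succAbove j) / abs (u i)) ≤ 1 := fun j => by
        rw [abs_div, abs_abs]
        exact div_le_one_of_le₀ (hi _) hpos.le
      exact ⟨fun j => (abs_le.1 (h j)).1, fun j => (abs_le.1 (h j)).2⟩
    · have hF : sphFace k i s (fun j => u (i.succAbove j) / |u i|) = |u i|⁻¹ • u := by
        ext j
        refine i.succAboveCases ?_ (fun j => ?_) j
        · simp only [sphFace, Fin.insertNth_apply_same, PiLp.smul_apply, smul_eq_mul]
          field_simp
          linarith
        · simp only [sphFace, Fin.insertNth_apply_succAbove, PiLp.smul_apply, smul_eq_mul]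
          field_simp
      unfold sphChart
      rw [hF, norm_smul, hu1, smul_smul]
      simp [hpos.ne']
  rw [Set.mem_iUnion]
  refine ⟨i, ?_⟩
  rcases abs_choice (u i) with h | h
  · left; exact key 1 (by linarith)
  · right; exact key (-1) (by linarith)

lemma sphMeasure_lt_top (k : ℕ) : sphMeasure k Set.univ < ∞ := by
  unfold sphMeasure
  have h := (isometry_subtype_coe (s := Metric.sphere (0 : EuclideanSpace ℝ (Fin (k+1))) 1)).hausdorffMeasure_image
    (d := (k:ℝ)) (Or.inl (Nat.cast_nonneg k)) Set.univ
  rw [← h, Set.image_univ, Subtype.range_coe]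
  refine (measure_mono (sph_cover k)).trans_lt ?_
  refine (measure_iUnion_le _).trans_lt ?_
  rw [tsum_fintype]
  refine ENNReal.sum_lt_top.2 fun i _ => ?_
  exact measure_union_lt_top (sphChart_finite k i 1 (by simp)) (sphChart_finite k i (-1) (by simp))

lemma sphMeasure_pos (k : ℕ) : sphMeasure k Set.univ ≠ 0 := by
  unfold sphMeasure
  let P : Sph k → (Fin k → ℝ) := fun u j => u.1 j.succ
  have hP : LipschitzWith 1 P := by
    refine LipschitzWith.of_dist_le_mul fun x y => ?_
    rw [NNReal.coe_one, one_mul, dist_pi_le_iff dist_nonneg]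
    intro j
    have := PiLp.norm_apply_le (x.1 - y.1) j.succ
    rw [Subtype.dist_eq, dist_eq_norm, dist_eq_norm]
    exact this
  have hle := hP.hausdorffMeasure_image_le (d := (k:ℝ)) (Nat.cast_nonneg k) Set.univ
  have hv : (μH[(k:ℝ)] : Measure (Fin k → ℝ)) = volume := by
    have := hausdorffMeasure_pi_real (ι := Fin k)
    simpa using this
  intro h0
  rw [h0, mul_zero, hv] at hle
  have hopen : IsOpen {x : Fin k → ℝ | ∑ j, x j ^ 2 < 1} :=
    isOpen_lt (by fun_prop) continuous_const
  have hpos := hopen.measure_pos volume ⟨0, by simp⟩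
  have hsub : {x : Fin k → ℝ | ∑ j, x j ^ 2 < 1} ⊆ P '' Set.univ := by
    intro x hx
    have hx' : ∑ j, x j ^ 2 < 1 := hx
    refine ⟨⟨WithLp.toLp 2 (Fin.cons (√(1 - ∑ j, x j ^ 2)) x), ?_⟩, trivial, ?_⟩
    · rw [mem_sphere_zero_iff_norm, EuclideanSpace.norm_eq, Fin.sum_univ_succ]
      simp only [Fin.cons_zero, Fin.cons_succ, Real.norm_eq_abs, sq_abs]
      rw [Real.sq_sqrt (by linarith)]
      simp
    · ext j
      simp [P]
  have := (hpos.trans_le (measure_mono hsub)).trans_le hle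
  exact lt_irrefl _ this

lemma gd_measurable (k : ℕ) : Measurable (fun p : Sph k × Sph k => gd p.1 p.2) := by
  have : Continuous (fun p : Sph k × Sph k => gd p.1 p.2) := by
    unfold gd
    exact Real.continuous_arccos.comp (by fun_prop)
  exact this.measurable

/-- The pair correlation function of the spatial components of a shot noise Cox process
depends on the spherical kernel `k₀₂` only through the constant `c₁`. -/
theorem sncp_spatial_pcf (d k : ℕ) (hd : 1 ≤ d) (hk : 1 ≤ k)
    (C : ℝ≥0) (k₀₁ : Eucl d → ℝ≥0) (k₀₂ : ℝ → ℝ≥0)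
    (hk₀₁ : Measurable k₀₁) (hk₀₂ : Measurable k₀₂) (y₁ y₂ : Eucl d) :
    (∫⁻ u₁, (∫⁻ u₂, sncpG C k₀₁ k₀₂ y₁ u₁ y₂ u₂ ∂(sphMeasure k)) ∂(sphMeasure k))
        / (sphMeasure k Set.univ) ^ 2 =
      1 + ((∫⁻ u', (∫⁻ u₁, (∫⁻ u₂, ((k₀₂ (gd u₁ u') : ℝ≥0∞) * (k₀₂ (gd u₂ u') : ℝ≥0∞))
            ∂(sphMeasure k)) ∂(sphMeasure k)) ∂(sphMeasure k)) / (sphMeasure k Set.univ) ^ 2) *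
        (C : ℝ≥0∞) * ∫⁻ y', ((k₀₁ (y₁ - y') : ℝ≥0∞) * (k₀₁ (y₂ - y') : ℝ≥0∞)) := by
  have hfin := sphMeasure_lt_top k
  have hpos := sphMeasure_pos k
  haveI : IsFiniteMeasure (sphMeasure k) := ⟨hfin⟩
  set ν := sphMeasure k with hν
  have hm : Measurable (fun p : Sph k × Sph k => (k₀₂ (gd p.1 p.2) : ℝ≥0∞)) :=
    (hk₀₂.comp (gd_measurable k)).coe_nnreal_ennreal
  have hm3 : Measurable (fun p : (Sph k × Sph k) × Sph k =>
      (k₀₂ (gd p.1.1 p.2) : ℝ≥0∞) * (k₀₂ (gd p.1.2 p.2) : ℝ≥0∞)) :=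
    (hm.comp (g := fun p : Sph k × Sph k => (k₀₂ (gd p.1 p.2) : ℝ≥0∞))
      (f := fun p : (Sph k × Sph k) × Sph k => (p.1.1, p.2)) (by fun_prop)).mul
    (hm.comp (g := fun p : Sph k × Sph k => (k₀₂ (gd p.1 p.2) : ℝ≥0∞))
      (f := fun p : (Sph k × Sph k) × Sph k => (p.1.2, p.2)) (by fun_prop))
  have hA : Measurable (fun y' : Eucl d => (k₀₁ (y₁ - y') : ℝ≥0∞) * (k₀₁ (y₂ - y') : ℝ≥0∞)) := by
    fun_prop
  set A := ∫⁻ y', ((k₀₁ (y₁ - y') : ℝ≥0∞) * (k₀₁ (y₂ - y') : ℝ≥0∞)) with hAdef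
  let Φ : Sph k → Sph k → ℝ≥0∞ := fun u₁ u₂ =>
    ∫⁻ u', (k₀₂ (gd u₁ u') : ℝ≥0∞) * (k₀₂ (gd u₂ u') : ℝ≥0∞) ∂ν
  have hΦ : Measurable (fun p : Sph k × Sph k => Φ p.1 p.2) := hm3.lintegral_prod_right'
  have hG : ∀ u₁ u₂, sncpG C k₀₁ k₀₂ y₁ u₁ y₂ u₂ = 1 + (C * A) * Φ u₁ u₂ := by
    intro u₁ u₂
    have hmu : Measurable (fun u' : Sph k =>
        (k₀₂ (gd u₁ u') : ℝ≥0∞) * (k₀₂ (gd u₂ u') : ℝ≥0∞)) :=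
      hm3.comp (f := fun u' : Sph k => ((u₁, u₂), u')) (by fun_prop)
    unfold sncpG
    rw [mul_assoc, hAdef, ← lintegral_mul_const _ hA]
    congr 2
    refine lintegral_congr fun y' => ?_
    rw [← lintegral_const_mul _ hmu]
    refine lintegral_congr fun u' => ?_
    ring
  have h1 : ∀ u₁, ∫⁻ u₂, sncpG C k₀₁ k₀₂ y₁ u₁ y₂ u₂ ∂ν
      = ν Set.univ + (C * A) * ∫⁻ u₂, Φ u₁ u₂ ∂ν := by
    intro u₁
    have hmu : Measurable (Φ u₁) := hΦ.comp (f := fun u₂ : Sph k => (u₁, u₂)) (by fun_prop)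
    simp_rw [hG]
    rw [lintegral_add_left measurable_const, lintegral_const_mul _ hmu]
    simp
  simp_rw [h1]
  rw [lintegral_add_left measurable_const, lintegral_const_mul _ hΦ.lintegral_prod_right',
    lintegral_const]
  have hswap : ∫⁻ u₁, ∫⁻ u₂, Φ u₁ u₂ ∂ν ∂ν =
      ∫⁻ u', (∫⁻ u₁, (∫⁻ u₂, ((k₀₂ (gd u₁ u') : ℝ≥0∞) * (k₀₂ (gd u₂ u') : ℝ≥0∞)) ∂ν) ∂ν) ∂ν := by
    have ha : ∀ u₁, ∫⁻ u₂, Φ u₁ u₂ ∂ν =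
        ∫⁻ u', ∫⁻ u₂, (k₀₂ (gd u₁ u') : ℝ≥0∞) * (k₀₂ (gd u₂ u') : ℝ≥0∞) ∂ν ∂ν := by
      intro u₁
      refine lintegral_lintegral_swap (Measurable.aemeasurable ?_)
      exact hm3.comp (f := fun p : Sph k × Sph k => ((u₁, p.1), p.2)) (by fun_prop)
    simp_rw [ha]
    refine lintegral_lintegral_swap (Measurable.aemeasurable ?_)
    exact Measurable.lintegral_prod_right' (f := fun q : (Sph k × Sph k) × Sph k =>
        (k₀₂ (gd q.1.1 q.1.2) : ℝ≥0∞) * (k₀₂ (gd q.2 q.1.2) : ℝ≥0∞))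
      (hm3.comp (f := fun q : (Sph k × Sph k) × Sph k => ((q.1.1, q.2), q.1.2)) (by fun_prop))
  rw [hswap, ENNReal.add_div, ← sq, ENNReal.div_self (pow_ne_zero 2 hpos)
    (ENNReal.pow_ne_top hfin.ne)]
  simp only [div_eq_mul_inv]
  ring
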